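/- There exists an absolute constant C > 0 such that for every θ ∈ (0,1) and every positive integer n, ∫_{A} G(s,t,u,v) ds dt du dv ≤ C · n^{2-θ} θ^{-1} (1-θ)^{-3}, and there exists an absolute constant c > 0 such that this integral is ≥ c · n^{2-θ} θ^{-1} (1-θ)^{-3} whenever additionally n^{1-θ} ≥ 8; here A = { (s,t,u,v) ∈ (0,∞)⁴ : 0 < u < 1, 1 ≤ v < n^{1/2}, t < n^{1/4} v^{-1/2}, s ≥ u^{1/2} v^{1/2} t }. -/

import Mathlib

open MeasureTheory Set Real

/-- The integrand `G(s,t,u,v)` from the paper's computation of the completely 1-summing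
norm of the identity `OH_n → ℓ^n_p`, with `θ = 2/p'`. Here `p = (s, t, u, v)`. -/
noncomputable def G (θ : ℝ) (n : ℕ) (p : ℝ × ℝ × ℝ × ℝ) : ℝ :=
  (n : ℝ) ^ (2 : ℕ) * p.1 ^ (-1 - 2 * θ) * p.2.1 ^ (-1 - 2 * θ) *
    min (min (min ((n : ℝ)⁻¹ * p.1 ^ (4 : ℝ) * p.2.2.1 ^ (-2 : ℝ) * p.2.2.2 ^ (-2 : ℝ))
                  ((n : ℝ)⁻¹ * p.2.1 ^ (4 : ℝ)))
             (min (p.1 ^ (4 : ℝ) * p.2.2.1 ^ (-2 : ℝ)) (p.2.1 ^ (4 : ℝ) * p.2.2.2 ^ (-2 : ℝ))))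
        (min (min (p.2.2.1 ^ (-2 : ℝ) * p.2.2.2 ^ (-2 : ℝ)) (p.2.2.1 ^ (-2 : ℝ)))
             (min 1 (p.2.2.2 ^ (-2 : ℝ))))

/-- The region of integration. -/
def A (n : ℕ) : Set (ℝ × ℝ × ℝ × ℝ) :=
  {p | 0 < p.1 ∧ 0 < p.2.1 ∧ 0 < p.2.2.1 ∧ 0 < p.2.2.2 ∧ p.2.2.1 < 1 ∧ 1 ≤ p.2.2.2 ∧ p.2.2.2 < (n : ℝ) ^ ((1:ℝ)/2) ∧ p.2.1 < (n : ℝ) ^ ((1:ℝ)/4) * p.2.2.2 ^ (-(1/2) : ℝ) ∧ p.2.2.1 ^ ((1:ℝ)/2) * p.2.2.2 ^ ((1:ℝ)/2) * p.2.1 ≤ p.1}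

lemma lint_Ici (a r : ℝ) (ha : 0 < a) (hr : r < -1) :
    ∫⁻ x in Ici a, ENNReal.ofReal (x ^ r) = ENNReal.ofReal (-a ^ (r + 1) / (r + 1)) := by
  rw [setLIntegral_congr (Ioi_ae_eq_Ici (a := a)).symm, ← integral_Ioi_rpow_of_lt hr ha,
    ofReal_integral_eq_lintegral_ofReal (integrableOn_Ioi_rpow_of_lt hr ha)]
  refine (ae_restrict_iff' measurableSet_Ioi).2 (Filter.Eventually.of_forall fun x hx => ?_)
  exact rpow_nonneg (ha.le.trans (le_of_lt hx)) _

lemma lint_Ioc (a b r : ℝ) (ha : 0 ≤ a) (hab : a ≤ b) (h : -1 < r ∨ r ≠ -1 ∧ 0 < a) :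
    ∫⁻ x in Ioc a b, ENNReal.ofReal (x ^ r)
      = ENNReal.ofReal ((b ^ (r + 1) - a ^ (r + 1)) / (r + 1)) := by
  have h0 : 0 < a → (0:ℝ) ∉ uIcc a b := by
    intro h1 h2
    rw [uIcc_of_le hab] at h2
    exact absurd h2.1 (not_le.2 h1)
  have hi : IntervalIntegrable (fun x : ℝ => x ^ r) volume a b := by
    rcases h with h | h
    · exact intervalIntegral.intervalIntegrable_rpow' h
    · exact intervalIntegral.intervalIntegrable_rpow (Or.inr (h0 h.2))
  rw [← integral_rpow (h.imp id fun h => ⟨h.1, h0 h.2⟩), intervalIntegral.integral_of_le hab,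
    ofReal_integral_eq_lintegral_ofReal ((intervalIntegrable_iff_integrableOn_Ioc_of_le hab).1 hi)]
  refine (ae_restrict_iff' measurableSet_Ioc).2 (Filter.Eventually.of_forall fun x hx => ?_)
  exact rpow_nonneg (ha.trans (le_of_lt hx.1)) _

lemma lint_Ioo (a b r : ℝ) (ha : 0 ≤ a) (hab : a ≤ b) (h : -1 < r ∨ r ≠ -1 ∧ 0 < a) :
    ∫⁻ x in Ioo a b, ENNReal.ofReal (x ^ r)
      = ENNReal.ofReal ((b ^ (r + 1) - a ^ (r + 1)) / (r + 1)) := by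
  rw [setLIntegral_congr Ioo_ae_eq_Ioc, lint_Ioc a b r ha hab h]

lemma lint_Ico (a b r : ℝ) (ha : 0 ≤ a) (hab : a ≤ b) (h : -1 < r ∨ r ≠ -1 ∧ 0 < a) :
    ∫⁻ x in Ico a b, ENNReal.ofReal (x ^ r)
      = ENNReal.ofReal ((b ^ (r + 1) - a ^ (r + 1)) / (r + 1)) := by
  rw [setLIntegral_congr Ico_ae_eq_Ioc, lint_Ioc a b r ha hab h]

/-- Integrals of functions of the form constant times power on a set. -/
lemma lint_gen (f : ℝ → ENNReal) (K r I : ℝ) (S : Set ℝ) (hS : MeasurableSet S) (hK : 0 ≤ K)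
    (hI : ∫⁻ x in S, ENNReal.ofReal (x ^ r) = ENNReal.ofReal I)
    (hin : ∀ x ∈ S, f x = ENNReal.ofReal (K * x ^ r)) (hout : ∀ x ∉ S, f x = 0) :
    ∫⁻ x, f x = ENNReal.ofReal (K * I) := by
  have : f = S.indicator (fun x => ENNReal.ofReal K * ENNReal.ofReal (x ^ r)) := by
    funext x
    by_cases hx : x ∈ S
    · rw [indicator_of_mem hx, hin x hx, ENNReal.ofReal_mul hK]
    · rw [indicator_of_notMem hx, hout x hx]
  rw [this, lintegral_indicator hS, lintegral_const_mul' _ _ ENNReal.ofReal_ne_top, hI,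
    ENNReal.ofReal_mul hK]

lemma measurableSet_A (n : ℕ) : MeasurableSet (A n) := by
  unfold A
  measurability

lemma G_eq (θ : ℝ) (n : ℕ) (hn : 0 < n) (s t u v : ℝ) (hp : (s, t, u, v) ∈ A n) :
    G θ n (s, t, u, v) = n * s ^ (-1 - 2 * θ) * t ^ (3 - 2 * θ) := by
  obtain ⟨hs, ht, hu, hv, hu1, hv1, hvn, htT, hsa⟩ := hp
  simp only at hs ht hu hv hu1 hv1 hvn htT hsa
  have hN : (0:ℝ) < n := by exact_mod_cast hn
  have e4 : ∀ x : ℝ, x ^ (4:ℝ) = x ^ (4:ℕ) := fun x => by exact_mod_cast rpow_natCast x 4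
  have e2 : ∀ x : ℝ, 0 < x → x ^ (-2:ℝ) = (x ^ (2:ℕ))⁻¹ := fun x hx => by
    rw [rpow_neg hx.le]; congr 1; exact_mod_cast rpow_natCast x 2
  -- v² ≤ n
  have h1 : v ^ 2 ≤ n := by
    have := pow_le_pow_left₀ hv.le hvn.le 2
    rwa [← rpow_natCast ((n:ℝ) ^ ((1:ℝ)/2)), ← rpow_mul hN.le, show (1:ℝ)/2 * ((2:ℕ):ℝ) = 1 by norm_num,
      rpow_one] at this
  have h2 : t ^ 4 ≤ n * (v ^ 2)⁻¹ := by
    have := pow_le_pow_left₀ ht.le htT.le 4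
    rwa [mul_pow, ← rpow_natCast ((n:ℝ) ^ ((1:ℝ)/4)), ← rpow_mul hN.le,
      show (1:ℝ)/4 * ((4:ℕ):ℝ) = 1 by norm_num, rpow_one, ← rpow_natCast (v ^ (-(1/2) : ℝ)),
      ← rpow_mul hv.le, show (-(1/2) : ℝ) * ((4:ℕ):ℝ) = -2 by norm_num, e2 v hv] at this
  have h3 : u ^ 2 * v ^ 2 * t ^ 4 ≤ s ^ 4 := by
    have := pow_le_pow_left₀ (by positivity) hsa 4
    rwa [mul_pow, mul_pow, ← rpow_natCast (u ^ ((1:ℝ)/2)), ← rpow_mul hu.le,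
      ← rpow_natCast (v ^ ((1:ℝ)/2)), ← rpow_mul hv.le,
      show (1:ℝ)/2 * ((4:ℕ):ℝ) = (2:ℕ) by norm_num, rpow_natCast, rpow_natCast] at this
  have hv2 : 1 ≤ v ^ 2 := one_le_pow₀ hv1
  have hu2 : u ^ 2 ≤ 1 := pow_le_one₀ hu.le hu1.le
  have hn1 : 1 ≤ (n:ℝ) := by exact_mod_cast hn
  have hui : 1 ≤ (u ^ 2)⁻¹ := (one_le_inv₀ (by positivity)).2 hu2
  have hvi : (v ^ 2)⁻¹ ≤ 1 := inv_le_one_of_one_le₀ hv2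
  have hvp : 0 < (v ^ 2)⁻¹ := by positivity
  have m8 : (n:ℝ)⁻¹ * t ^ 4 ≤ (v ^ 2)⁻¹ := by
    rw [inv_mul_le_iff₀ hN]; exact h2
  have m3 : v ^ 2 * t ^ 4 ≤ s ^ 4 * (u ^ 2)⁻¹ := by
    rw [le_mul_inv_iff₀ (by positivity)]; nlinarith
  have m1 : (n:ℝ)⁻¹ * t ^ 4 ≤ (n:ℝ)⁻¹ * s ^ 4 * (u ^ 2)⁻¹ * (v ^ 2)⁻¹ := by
    rw [le_mul_inv_iff₀ (by positivity), mul_assoc, mul_assoc]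
    refine mul_le_mul_of_nonneg_left ?_ (by positivity)
    linarith
  have hni : (n:ℝ)⁻¹ ≤ 1 := inv_le_one_of_one_le₀ hn1
  have hnv : (n:ℝ)⁻¹ ≤ (v ^ 2)⁻¹ := inv_anti₀ (by positivity) h1
  have ht4 : 0 < t ^ 4 := by positivity
  have m3' : (n:ℝ)⁻¹ * t ^ 4 ≤ s ^ 4 * (u ^ 2)⁻¹ := by nlinarith
  have m4 : (n:ℝ)⁻¹ * t ^ 4 ≤ t ^ 4 * (v ^ 2)⁻¹ := by nlinarith
  have m5 : (n:ℝ)⁻¹ * t ^ 4 ≤ (u ^ 2)⁻¹ * (v ^ 2)⁻¹ := by nlinarith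
  have m6 : (n:ℝ)⁻¹ * t ^ 4 ≤ (u ^ 2)⁻¹ := by linarith
  have m7 : (n:ℝ)⁻¹ * t ^ 4 ≤ 1 := by linarith
  unfold G
  simp only
  rw [e4, e4, e2 u hu, e2 v hv, min_eq_right m1,
    min_eq_left (le_min m3' m4), min_eq_left (le_min (le_min m5 m6) (le_min m7 m8))]
  rw [show (3 - 2 * θ : ℝ) = (-1 - 2 * θ) + (4:ℕ) by push_cast; ring, rpow_add ht, rpow_natCast]
  field_simp

noncomputable def F0 (θ : ℝ) (n : ℕ) : ℝ × ℝ × ℝ × ℝ → ENNReal :=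
  (A n).indicator fun p => ENNReal.ofReal (n * p.1 ^ (-1 - 2 * θ) * p.2.1 ^ (3 - 2 * θ))

lemma F0_meas (θ : ℝ) (n : ℕ) : Measurable (F0 θ n) := by
  refine Measurable.indicator ?_ (measurableSet_A n)
  fun_prop

def A1 (n : ℕ) : Set (ℝ × ℝ × ℝ) :=
  {p | 0 < p.1 ∧ 0 < p.2.1 ∧ p.2.1 < 1 ∧ 1 ≤ p.2.2 ∧ p.2.2 < (n : ℝ) ^ ((1:ℝ)/2) ∧
    p.1 < (n : ℝ) ^ ((1:ℝ)/4) * p.2.2 ^ (-(1/2) : ℝ)}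

def A2 (n : ℕ) : Set (ℝ × ℝ) :=
  {p | 0 < p.1 ∧ p.1 < 1 ∧ 1 ≤ p.2 ∧ p.2 < (n : ℝ) ^ ((1:ℝ)/2)}

noncomputable def F1 (θ : ℝ) (n : ℕ) : ℝ × ℝ × ℝ → ENNReal :=
  (A1 n).indicator fun p =>
    ENNReal.ofReal (n / (2 * θ) * p.1 ^ (3 - 4 * θ) * p.2.1 ^ (-θ) * p.2.2 ^ (-θ))

noncomputable def F2 (θ : ℝ) (n : ℕ) : ℝ × ℝ → ENNReal :=
  (A2 n).indicator fun p =>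
    ENNReal.ofReal (n ^ (2 - θ) / (8 * θ * (1 - θ)) * p.1 ^ (-θ) * p.2 ^ (θ - 2))

noncomputable def F3 (θ : ℝ) (n : ℕ) : ℝ → ENNReal :=
  (Ico 1 ((n : ℝ) ^ ((1:ℝ)/2))).indicator fun v =>
    ENNReal.ofReal (n ^ (2 - θ) / (8 * θ * (1 - θ) ^ 2) * v ^ (θ - 2))

lemma step1 (θ : ℝ) (n : ℕ) (h0 : 0 < θ) (t u v : ℝ) :
    ∫⁻ s, F0 θ n (s, t, u, v) = F1 θ n (t, u, v) := by
  by_cases hq : (t, u, v) ∈ A1 n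
  · rw [F1, indicator_of_mem hq]
    obtain ⟨ht, hu, hu1, hv1, hvn, htT⟩ := hq
    simp only at ht hu hu1 hv1 hvn htT ⊢
    have hv : 0 < v := by linarith
    have ha : 0 < u ^ ((1:ℝ)/2) * v ^ ((1:ℝ)/2) * t := by positivity
    rw [lint_gen (fun s => F0 θ n (s, t, u, v)) (n * t ^ (3 - 2 * θ)) (-1 - 2 * θ) _
      (Ici (u ^ ((1:ℝ)/2) * v ^ ((1:ℝ)/2) * t)) measurableSet_Ici (by positivity)
      (lint_Ici _ _ ha (by linarith))]
    · congr 1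
      rw [show -1 - 2 * θ + 1 = -(2 * θ) by ring, mul_rpow (by positivity) ht.le,
        mul_rpow (by positivity) (by positivity), ← rpow_mul hu.le, ← rpow_mul hv.le,
        show (1:ℝ)/2 * (-(2 * θ)) = -θ by ring, show 3 - 4 * θ = (3 - 2 * θ) + (-(2 * θ)) by ring,
        rpow_add ht]
      field_simp
    · intro s hs
      have hs' : (s, t, u, v) ∈ A n :=
        ⟨lt_of_lt_of_le ha hs, ht, hu, hv, hu1, hv1, hvn, htT, hs⟩
      rw [F0, indicator_of_mem hs']
      congr 1
      simp only
      ring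
    · intro s hs
      rw [F0, indicator_of_notMem]
      intro h
      exact hs h.2.2.2.2.2.2.2.2
  · rw [F1, indicator_of_notMem hq]
    have : ∀ s, F0 θ n (s, t, u, v) = 0 := by
      intro s
      rw [F0, indicator_of_notMem]
      rintro ⟨hs, ht, hu, hv, hu1, hv1, hvn, htT, hsa⟩
      exact hq ⟨ht, hu, hu1, hv1, hvn, htT⟩
    simp [this]

lemma step2 (θ : ℝ) (n : ℕ) (h0 : 0 < θ) (h1 : θ < 1) (hn : 0 < n) (u v : ℝ) :
    ∫⁻ t, F1 θ n (t, u, v) = F2 θ n (u, v) := by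
  have hN : (0:ℝ) < n := by exact_mod_cast hn
  have h1' : 0 < 1 - θ := by linarith
  by_cases hq : (u, v) ∈ A2 n
  · rw [F2, indicator_of_mem hq]
    obtain ⟨hu, hu1, hv1, hvn⟩ := hq
    simp only at hu hu1 hv1 hvn ⊢
    have hv : 0 < v := by linarith
    rw [lint_gen (fun t => F1 θ n (t, u, v)) (n / (2 * θ) * u ^ (-θ) * v ^ (-θ)) (3 - 4 * θ) _
      (Ioo 0 ((n : ℝ) ^ ((1:ℝ)/4) * v ^ (-(1/2) : ℝ))) measurableSet_Ioo (by positivity)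
      (lint_Ioo _ _ _ le_rfl (by positivity) (Or.inl (by linarith)))]
    · congr 1
      rw [show 3 - 4 * θ + 1 = 4 * (1 - θ) by ring, zero_rpow (by positivity),
        mul_rpow (by positivity) (by positivity), ← rpow_mul hN.le, ← rpow_mul hv.le,
        show (1:ℝ)/4 * (4 * (1 - θ)) = 1 - θ by ring,
        show (2:ℝ) - θ = 1 + (1 - θ) by ring, rpow_add hN, rpow_one,
        show θ - 2 = -θ + (-(1/2)) * (4 * (1 - θ)) by ring, rpow_add hv]
      field_simp
      ring
    · intro t ht
      have : (t, u, v) ∈ A1 n := ⟨ht.1, hu, hu1, hv1, hvn, ht.2⟩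
      rw [F1, indicator_of_mem this]
      congr 1
      simp only
      ring
    · intro t ht
      rw [F1, indicator_of_notMem]
      intro h
      exact ht ⟨h.1, h.2.2.2.2.2⟩
  · rw [F2, indicator_of_notMem hq]
    have : ∀ t, F1 θ n (t, u, v) = 0 := by
      intro s
      rw [F1, indicator_of_notMem]
      rintro ⟨ht, hu, hu1, hv1, hvn, htT⟩
      exact hq ⟨hu, hu1, hv1, hvn⟩
    simp [this]

lemma step3 (θ : ℝ) (n : ℕ) (h0 : 0 < θ) (h1 : θ < 1) (v : ℝ) :
    ∫⁻ u, F2 θ n (u, v) = F3 θ n v := by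
  have h1' : 0 < 1 - θ := by linarith
  by_cases hq : v ∈ Ico 1 ((n : ℝ) ^ ((1:ℝ)/2))
  · rw [F3, indicator_of_mem hq]
    have hv : 0 < v := by linarith [hq.1]
    rw [lint_gen (fun u => F2 θ n (u, v)) (n ^ (2 - θ) / (8 * θ * (1 - θ)) * v ^ (θ - 2)) (-θ) _
      (Ioo 0 1) measurableSet_Ioo (by positivity)
      (lint_Ioo _ _ _ le_rfl (by positivity) (Or.inl (by linarith)))]
    · congr 1
      rw [show -θ + 1 = 1 - θ by ring, zero_rpow (by positivity), one_rpow]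
      field_simp
      ring
    · intro u hu
      have : (u, v) ∈ A2 n := ⟨hu.1, hu.2, hq.1, hq.2⟩
      rw [F2, indicator_of_mem this]
      congr 1
      simp only
      ring
    · intro t ht
      rw [F2, indicator_of_notMem]
      intro h
      exact ht ⟨h.1, h.2.1⟩
  · rw [F3, indicator_of_notMem hq]
    have : ∀ t, F2 θ n (t, v) = 0 := by
      intro s
      rw [F2, indicator_of_notMem]
      rintro ⟨hu, hu1, hv1, hvn⟩
      exact hq ⟨hv1, hvn⟩
    simp [this]

lemma step4 (θ : ℝ) (n : ℕ) (h0 : 0 < θ) (h1 : θ < 1) (hn : 0 < n) :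
    ∫⁻ v, F3 θ n v = ENNReal.ofReal
      (n ^ (2 - θ) / (8 * θ * (1 - θ) ^ 3) * (1 - n ^ (-(1 - θ) / 2))) := by
  have hN : (0:ℝ) < n := by exact_mod_cast hn
  have hN1 : (1:ℝ) ≤ n := by exact_mod_cast hn
  have h1' : 0 < 1 - θ := by linarith
  have h2 : θ - 1 ≠ 0 := by linarith
  rw [lint_gen (F3 θ n) (n ^ (2 - θ) / (8 * θ * (1 - θ) ^ 2)) (θ - 2) _
      (Ico 1 ((n : ℝ) ^ ((1:ℝ)/2))) measurableSet_Ico (by positivity)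
      (lint_Ico _ _ _ zero_le_one (one_le_rpow hN1 (by norm_num))
        (Or.inr ⟨by intro h; apply h2; linarith, one_pos⟩))]
  · congr 1
    rw [one_rpow, ← rpow_mul hN.le, show (1:ℝ)/2 * (θ - 2 + 1) = -(1 - θ) / 2 by ring,
      show θ - 2 + 1 = -(1 - θ) by ring]
    generalize (n:ℝ) ^ (-(1 - θ) / 2) = X
    field_simp
    ring
  · intro v hv
    rw [F3, indicator_of_mem hv]
  · intro v hv
    rw [F3, indicator_of_notMem hv]

lemma lint_F0 (θ : ℝ) (n : ℕ) (h0 : 0 < θ) (h1 : θ < 1) (hn : 0 < n) :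
    ∫⁻ p, F0 θ n p = ENNReal.ofReal
      (n ^ (2 - θ) / (8 * θ * (1 - θ) ^ 3) * (1 - n ^ (-(1 - θ) / 2))) := by
  have e1 : (fun q : ℝ × ℝ × ℝ => ∫⁻ s, F0 θ n (s, q)) = F1 θ n := by
    funext q; exact step1 θ n h0 q.1 q.2.1 q.2.2
  have e2 : (fun q : ℝ × ℝ => ∫⁻ s, F1 θ n (s, q)) = F2 θ n := by
    funext q; exact step2 θ n h0 h1 hn q.1 q.2
  have e3 : (fun q : ℝ => ∫⁻ s, F2 θ n (s, q)) = F3 θ n := by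
    funext q; exact step3 θ n h0 h1 q
  have m0 := F0_meas θ n
  have m1 : Measurable (F1 θ n) := e1 ▸ m0.lintegral_prod_left'
  have m2 : Measurable (F2 θ n) := e2 ▸ m1.lintegral_prod_left'
  rw [Measure.volume_eq_prod, lintegral_prod_symm _ m0.aemeasurable, e1,
    Measure.volume_eq_prod, lintegral_prod_symm _ m1.aemeasurable, e2,
    Measure.volume_eq_prod, lintegral_prod_symm _ m2.aemeasurable, e3, step4 θ n h0 h1 hn]

lemma int_G (θ : ℝ) (n : ℕ) (h0 : 0 < θ) (h1 : θ < 1) (hn : 0 < n) :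
    ∫ p in A n, G θ n p =
      n ^ (2 - θ) / (8 * θ * (1 - θ) ^ 3) * (1 - n ^ (-(1 - θ) / 2)) := by
  have hN1 : (1:ℝ) ≤ n := by exact_mod_cast hn
  have h1' : 0 < 1 - θ := by linarith
  have hX : (n:ℝ) ^ (-(1 - θ) / 2) ≤ 1 := rpow_le_one_of_one_le_of_nonpos hN1 (by linarith)
  rw [setIntegral_congr_fun (g := fun p : ℝ × ℝ × ℝ × ℝ =>
    n * p.1 ^ (-1 - 2 * θ) * p.2.1 ^ (3 - 2 * θ)) (measurableSet_A n)
    (fun p hp => G_eq θ n hn p.1 p.2.1 p.2.2.1 p.2.2.2 hp)]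
  rw [integral_eq_lintegral_of_nonneg_ae]
  · rw [← lintegral_indicator (measurableSet_A n)]
    have := lint_F0 θ n h0 h1 hn
    rw [F0] at this
    rw [this, ENNReal.toReal_ofReal]
    exact mul_nonneg (by positivity) (by linarith)
  · refine (ae_restrict_iff' (measurableSet_A n)).2 (Filter.Eventually.of_forall fun p hp => ?_)
    have a1 := hp.1
    have a2 := hp.2.1
    simp only [Pi.zero_apply]
    positivity
  · exact Measurable.aestronglyMeasurable (by fun_prop)

theorem stmt_15 :
    (∃ C : ℝ, 0 < C ∧ ∀ θ : ℝ, 0 < θ → θ < 1 → ∀ n : ℕ, 0 < n →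
      (∫ p in A n, G θ n p) ≤ C * ((n : ℝ) ^ (2 - θ) * θ ^ (-1 : ℝ) * (1 - θ) ^ (-3 : ℝ))) ∧
    (∃ c : ℝ, 0 < c ∧ ∀ θ : ℝ, 0 < θ → θ < 1 → ∀ n : ℕ, 0 < n →
      (8 : ℝ) ≤ (n : ℝ) ^ (1 - θ) →
      c * ((n : ℝ) ^ (2 - θ) * θ ^ (-1 : ℝ) * (1 - θ) ^ (-3 : ℝ)) ≤ ∫ p in A n, G θ n p) := by
  have key : ∀ θ : ℝ, 0 < θ → θ < 1 → ∀ n : ℕ, 0 < n → 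
      (∫ p in A n, G θ n p) = 1 / 8 * ((n : ℝ) ^ (2 - θ) * θ ^ (-1 : ℝ) * (1 - θ) ^ (-3 : ℝ)) *
        (1 - (n:ℝ) ^ (-(1 - θ) / 2)) := by
    intro θ h0 h1 n hn
    have h1' : 0 < 1 - θ := by linarith
    rw [int_G θ n h0 h1 hn, rpow_neg_one, rpow_neg h1'.le,
      show (1 - θ) ^ (3:ℝ) = (1 - θ) ^ (3:ℕ) by exact_mod_cast rpow_natCast (1 - θ) 3]
    field_simp
  refine ⟨⟨1 / 8, by norm_num, ?_⟩, ⟨1 / 16, by norm_num, ?_⟩⟩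
  · intro θ h0 h1 n hn
    have h1' : 0 < 1 - θ := by linarith
    rw [key θ h0 h1 n hn]
    refine mul_le_of_le_one_right (by positivity) ?_
    have : 0 ≤ (n:ℝ) ^ (-(1 - θ) / 2) := by positivity
    linarith
  · intro θ h0 h1 n hn h8
    have h1' : 0 < 1 - θ := by linarith
    have hN : (0:ℝ) < n := by exact_mod_cast hn
    rw [key θ h0 h1 n hn]
    have hX : (n:ℝ) ^ (-(1 - θ) / 2) ≤ 1 / 2 := by
      refine (sq_le_sq₀ (by positivity) (by norm_num)).1 ?_
      rw [← rpow_natCast, ← rpow_mul hN.le, show -(1 - θ) / 2 * ((2:ℕ):ℝ) = -(1 - θ) by push_cast; ring,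
        rpow_neg hN.le]
      refine (inv_anti₀ (by norm_num) h8).trans (by norm_num)
    have hP : 0 ≤ (n : ℝ) ^ (2 - θ) * θ ^ (-1 : ℝ) * (1 - θ) ^ (-3 : ℝ) := by positivity
    nlinarith
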